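/- If the equivalence problem for finite Nmatrices is decidable — that is, if there is an algorithm which, given (an encoding of) a finite signature Σ and finite Σ-Nmatrices M_1 and M_2, decides whether ⊢_{M_1} = ⊢_{M_2} — then the theorem existence problem for finite Nmatrices (deciding whether Thm(Σ, ⊢_M) ≠ ∅ for a given finite Σ-Nmatrix M) is decidable. Consequently, since the theorem existence problem for finite Nmatrices is undecidable, the equivalence problem for finite Nmatrices is undecidable. -/

import Mathlib

structure Signature where
  Conn : Type
  arity : Conn → ℕ

inductive Fm (S : Signature) : Type where
  | var : ℕ → Fm S
  | app : (c : S.Conn) → (Fin (S.arity c) → Fm S) → Fm S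

def Fm.subst {S : Signature} (σ : ℕ → Fm S) : Fm S → Fm S
  | .var i => σ i
  | .app c args => .app c (fun j => (args j).subst σ)

def Fm.varsLT {S : Signature} (n : ℕ) : Fm S → Prop
  | .var i => i < n
  | .app _ args => ∀ j, (args j).varsLT n

structure NMatrix (S : Signature) (V : Type) where
  D : Set V
  interp : (c : S.Conn) → (Fin (S.arity c) → V) → Set V
  interp_nonempty : ∀ c args, (interp c args).Nonempty

def IsVal {S : Signature} {V : Type} (M : NMatrix S V) (v : Fm S → V) : Prop :=
  ∀ (c : S.Conn) (args : Fin (S.arity c) → Fm S),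
    v (Fm.app c args) ∈ M.interp c (fun i => v (args i))

def Entails {S : Signature} {V : Type} (M : NMatrix S V) (Γ : Set (Fm S)) (A : Fm S) : Prop :=
  ∀ v, IsVal M v → (∀ B ∈ Γ, v B ∈ M.D) → v A ∈ M.D

def Interderiv {S : Signature} {V : Type} (M : NMatrix S V) (A B : Fm S) : Prop :=
  Entails M {A} B ∧ Entails M {B} A

def Deterministic {S : Signature} {V : Type} (M : NMatrix S V) : Prop :=
  ∀ c args, ∃ x, M.interp c args = {x}

/-- The signature encoded by a list of arities. -/
abbrev codeSig (ar : List ℕ) : Signature := ⟨Fin ar.length, fun j => ar.get j⟩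

-- The finite Σ-Nmatrix encoded by the data `(ar, m, tbl, ds)`: its truth-values are
-- `Fin (m+1)`, its designated values are those listed in `ds`, and the interpretation of
-- connective `j` on an argument tuple is read off from the table `tbl` (defaulting to `{0}`
-- on malformed entries, so that decoding is total).
open Classical in
noncomputable def decodeNMat (ar : List ℕ) (m : ℕ) (tbl : List (List (List ℕ)))
    (ds : List ℕ) : NMatrix (codeSig ar) (Fin (m + 1)) where
  D := { x : Fin (m + 1) | (x : ℕ) ∈ ds }
  interp := fun j args =>
    let row := (tbl.getD (j : ℕ) []).getD (∑ i, ((args i) : ℕ) * (m + 1) ^ (i : ℕ)) []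
    if ∃ x : Fin (m + 1), (x : ℕ) ∈ row then { x : Fin (m + 1) | (x : ℕ) ∈ row } else {0}
  interp_nonempty := by
    intro j args
    dsimp only
    split
    · next h => exact h
    · exact ⟨0, rfl⟩

/-- Codes of finite Nmatrices (the signature part, a list of arities, comes first). -/
abbrev NMatCode : Type := List ℕ × ℕ × List (List (List ℕ)) × List ℕ

/-- The theorem existence problem for finite Nmatrices, as a predicate on codes. -/
noncomputable def thmExistsProblem (c : NMatCode) : Prop :=
  ∃ A : Fm (codeSig c.1), Entails (decodeNMat c.1 c.2.1 c.2.2.1 c.2.2.2) ∅ A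

/-- Codes of pairs of finite Nmatrices over a common finite signature (given by the shared
list of arities). -/
abbrev EqvCode : Type :=
  List ℕ × (ℕ × List (List (List ℕ)) × List ℕ) × (ℕ × List (List (List ℕ)) × List ℕ)

/-- The equivalence problem for finite Nmatrices: do the two encoded Σ-Nmatrices induce the
same consequence relation? -/
noncomputable def eqvProblem (c : EqvCode) : Prop :=
  ∀ (Γ : Set (Fm (codeSig c.1))) (A : Fm (codeSig c.1)),
    Entails (decodeNMat c.1 c.2.1.1 c.2.1.2.1 c.2.1.2.2) Γ A ↔
    Entails (decodeNMat c.1 c.2.2.1 c.2.2.2.1 c.2.2.2.2) Γ A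

/-!
If `N` is a tilded Nmatrix of `M`, then a valuation of `M` lifts to one of `N` that designates any
prescribed formulas, undesignated in `M` or not. So `N` proves `A` from premises not containing `A`
only if `A` is a theorem of `M`, and `N` is equivalent to the unconstrained Nmatrix exactly if `M`
has no theorems. Decidability of equivalence thus gives decidability of theorem existence.

Theorem existence is undecidable because Nmatrices can express derivability from Horn clauses over
binary trees. Formulas of the Nmatrix denote trees or derivations. A truth-value knows a tree only
through the colours of it and its components under an unknown Boolean colouring of all trees, which
is finite information, but a formula is a theorem only if it passes all checks under every
colouring, and two trees that have the same colour under every colouring are equal. Horn clauses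
in turn describe the input-output relation of a partial recursive function, and its halting problem
reduces to theorem existence.
-/

namespace NMatrix

variable {S : Signature} {V W : Type}

theorem ext {M N : NMatrix S V} (hD : M.D = N.D) (hinterp : M.interp = N.interp) : M = N := by
  cases M
  cases N
  congr

/-- `N.IsTilde M u` says that `N` is a tilded version of `M` with tilde-forgetful map `u`: every
value of `M` has a designated copy, and the undesignated values of `N` copy exactly those of `M`.
The tilded Nmatrix of the paper is the instance with one copy of each designated value. Allowing
further copies makes the condition easy to realise on codes. -/
structure IsTilde (N : NMatrix S W) (M : NMatrix S V) (u : W → V) : Prop where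
  interp_eq : ∀ c args, N.interp c args = u ⁻¹' M.interp c (u ∘ args)
  image_D : u '' N.D = Set.univ
  image_compl_D : u '' N.Dᶜ = M.Dᶜ

/-- The Nmatrix `U_S` on the values `0` and `1`, with `1` designated, in which every connective may
take every value. -/
def unconstrained (S : Signature) : NMatrix S (Fin 2) where
  D := {1}
  interp _ _ := Set.univ
  interp_nonempty _ _ := Set.univ_nonempty

theorem entails_unconstrained_iff {Γ : Set (Fm S)} {A : Fm S} :
    Entails (unconstrained S) Γ A ↔ A ∈ Γ := by
  classical
  refine ⟨fun h => ?_, fun hA v _ hΓ => hΓ A hA⟩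
  by_contra hA
  have hval : IsVal (unconstrained S) fun B => if B ∈ Γ then 1 else 0 := fun _ _ => trivial
  simpa [unconstrained, hA] using h _ hval fun B hB => by simp [unconstrained, hB]

namespace IsTilde

variable {N : NMatrix S W} {M : NMatrix S V} {u : W → V}

theorem isVal_iff (h : N.IsTilde M u) {v : Fm S → W} : IsVal N v ↔ IsVal M (u ∘ v) := by
  simp only [IsVal, h.interp_eq]
  rfl

/-- Entailing `A` from premises other than `A` must not use the premises, since every valuation of
`M` lifts to one of `N` that designates all formulas but, possibly, `A`. -/
theorem entails_iff (h : N.IsTilde M u) {Γ : Set (Fm S)} {A : Fm S} :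
    Entails N Γ A ↔ A ∈ Γ ∨ Entails M ∅ A := by
  classical
  constructor
  · intro hN
    by_contra! hcon
    obtain ⟨hAΓ, hM⟩ := hcon
    simp only [Entails, not_forall] at hM
    obtain ⟨v, hv, -, hvA⟩ := hM
    obtain ⟨w₀, hw₀D, hw₀⟩ : v A ∈ u '' N.Dᶜ := h.image_compl_D ▸ hvA
    have hlift : ∀ B, v B ∈ u '' N.D := fun B => h.image_D ▸ Set.mem_univ _
    choose w hwD hw using hlift
    have hval : u ∘ Function.update w A w₀ = v := by
      rw [Function.comp_update, hw₀, show u ∘ w = v from funext hw, Function.update_eq_self]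
    refine hw₀D (Function.update_self A w₀ w ▸ hN _ (h.isVal_iff.2 (hval ▸ hv)) fun B hB => ?_)
    rw [Function.update_of_ne (ne_of_mem_of_not_mem hB hAΓ)]
    exact hwD B
  · rintro (hA | hM) v hv hΓ
    · exact hΓ A hA
    · by_contra hvA
      have : u (v A) ∈ M.Dᶜ := h.image_compl_D ▸ Set.mem_image_of_mem u hvA
      exact this (hM _ (h.isVal_iff.1 hv) (by simp))

theorem forall_entails_iff_unconstrained (h : N.IsTilde M u) :
    (∀ Γ A, Entails N Γ A ↔ Entails (unconstrained S) Γ A) ↔ ¬ ∃ A, Entails M ∅ A := by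
  simp only [h.entails_iff, entails_unconstrained_iff, or_iff_left_iff_imp, not_exists]
  exact ⟨fun H A hA => H ∅ A hA, fun H Γ A hA => absurd hA (H A)⟩

end IsTilde

end NMatrix

/-- The list of the first `k` base-`b` digits of `x`, the least significant one first. This is how
an argument tuple is stored in the row index `x` of a table. -/
def digitList (b k x : ℕ) : List ℕ :=
  (List.range k).map fun i => x / b ^ i % b

theorem digitList_sum_mul_pow {b k : ℕ} (a : Fin k → Fin b) :
    digitList b k (∑ i, (a i : ℕ) * b ^ (i : ℕ)) = List.ofFn fun i => (a i : ℕ) := by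
  refine List.ext_getElem (by simp [digitList]) fun i hi _ => ?_
  have hi : i < k := by simpa [digitList] using hi
  simp only [digitList, List.getElem_map, List.getElem_range, List.getElem_ofFn]
  exact congrArg Fin.val (congrFun (finFunctionFinEquiv.symm_apply_apply a) ⟨i, hi⟩)

theorem ofDigits_ofFn {b k : ℕ} (a : Fin k → ℕ) :
    Nat.ofDigits b (List.ofFn a) = ∑ i, a i * b ^ (i : ℕ) := by
  induction k with
  | zero => simp
  | succ k ih =>
    rw [List.ofFn_succ, Nat.ofDigits_cons, ih, Fin.sum_univ_succ, Finset.mul_sum]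
    simp [pow_succ', mul_left_comm]

theorem primrec₂_pow : Primrec₂ fun b k : ℕ => b ^ k :=
  (Primrec.nat_rec (Primrec.const 1)
    (Primrec.nat_mul.comp (Primrec.snd.comp Primrec.snd) Primrec.fst).to₂).of_eq fun b k => by
      induction k with
      | zero => rfl
      | succ k ih => exact congrArg (· * b) ih

theorem primrec₂_ofDigits : Primrec₂ fun (b : ℕ) (l : List ℕ) => Nat.ofDigits b l := by
  have h : Primrec fun p : ℕ × List ℕ => p.2.foldr (fun x y => x + p.1 * y) 0 :=
    Primrec.list_foldr Primrec.snd (Primrec.const 0)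
      (Primrec.nat_add.comp (Primrec.fst.comp Primrec.snd)
        (Primrec.nat_mul.comp (Primrec.fst.comp Primrec.fst)
          (Primrec.snd.comp Primrec.snd))).to₂
  exact h.of_eq fun p => (Nat.ofDigits_eq_foldr ..).symm

theorem primrec_digitList {α : Type} [Primcodable α] {b k x : α → ℕ}
    (hb : Primrec b) (hk : Primrec k) (hx : Primrec x) :
    Primrec fun a => digitList (b a) (k a) (x a) :=
  Primrec.list_map (Primrec.list_range.comp hk)
    (Primrec.nat_mod.comp
      (Primrec.nat_div.comp (hx.comp Primrec.fst)
        (primrec₂_pow.comp (hb.comp Primrec.fst) Primrec.snd))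
      (hb.comp Primrec.fst)).to₂

/-- The table of a `k`-ary connective on `b` values, when `f l` lists the possible outputs on the
argument tuple `l`. -/
def tabulate (b k : ℕ) (f : List ℕ → List ℕ) : List (List ℕ) :=
  (List.range (b ^ k)).map fun x => f (digitList b k x)

theorem getD_tabulate {b k : ℕ} (f : List ℕ → List ℕ) (a : Fin k → Fin b) :
    (tabulate b k f).getD (∑ i, (a i : ℕ) * b ^ (i : ℕ)) [] =
      f (List.ofFn fun i => (a i : ℕ)) := by
  have hlt : ∑ i, (a i : ℕ) * b ^ (i : ℕ) < b ^ k := by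
    simpa using (finFunctionFinEquiv a).isLt
  rw [List.getD_eq_getElem _ _ (by simpa [tabulate] using hlt)]
  simp [tabulate, digitList_sum_mul_pow]

theorem primrec_tabulate {α : Type} [Primcodable α] {b k : α → ℕ} {f : α → List ℕ → List ℕ}
    (hb : Primrec b) (hk : Primrec k) (hf : Primrec₂ f) :
    Primrec fun a => tabulate (b a) (k a) (f a) :=
  Primrec.list_map (Primrec.list_range.comp (primrec₂_pow.comp hb hk))
    (hf.comp Primrec.fst (primrec_digitList (hb.comp Primrec.fst) (hk.comp Primrec.fst)
      Primrec.snd)).to₂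

/-- The tables of connectives with arities `ar`, when `f j l` lists the outputs of the `j`-th one
on the argument tuple `l`. -/
def tables (ar : List ℕ) (b : ℕ) (f : ℕ → List ℕ → List ℕ) : List (List (List ℕ)) :=
  (List.range ar.length).map fun j => tabulate b (ar.getD j 0) (f j)

theorem getD_tables {ar : List ℕ} {b : ℕ} (f : ℕ → List ℕ → List ℕ) (j : Fin ar.length) :
    (tables ar b f).getD j [] = tabulate b (ar.get j) (f j) := by
  rw [List.getD_eq_getElem _ _ (by simp [tables])]
  simp [tables]

theorem primrec_tables {α : Type} [Primcodable α] {ar : α → List ℕ} {b : α → ℕ}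
    {f : α → ℕ → List ℕ → List ℕ} (har : Primrec ar) (hb : Primrec b)
    (hf : Primrec fun p : (α × ℕ) × List ℕ => f p.1.1 p.1.2 p.2) :
    Primrec fun a => tables (ar a) (b a) (f a) :=
  Primrec.list_map (Primrec.list_range.comp (Primrec.list_length.comp har))
    (primrec_tabulate (hb.comp Primrec.fst)
      ((Primrec.list_getD 0).comp (har.comp Primrec.fst) Primrec.snd) hf.to₂).to₂

/-- The entry of a table as `decodeNMat` reads it: entries without values `≤ m` stand for `[0]`. -/
def validRow (m : ℕ) (r : List ℕ) : List ℕ :=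
  if ∃ x ∈ r, x ≤ m then r else [0]

theorem primrec₂_validRow : Primrec₂ validRow :=
  Primrec.ite ((PrimrecRel.exists_mem_list Primrec.nat_le).comp Primrec.snd Primrec.fst)
    Primrec.snd (Primrec.const [0])

theorem exists_mem_validRow (m : ℕ) (r : List ℕ) : ∃ x ∈ validRow m r, x ≤ m := by
  unfold validRow
  split_ifs with h
  · exact h
  · simp

theorem mem_decodeNMat_interp {ar : List ℕ} {m : ℕ} {tbl : List (List (List ℕ))} {ds : List ℕ}
    {j : Fin ar.length} {args : Fin (ar.get j) → Fin (m + 1)} {y : Fin (m + 1)} :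
    y ∈ (decodeNMat ar m tbl ds).interp j args ↔ (y : ℕ) ∈ validRow m
      ((tbl.getD j []).getD (∑ i, (args i : ℕ) * (m + 1) ^ (i : ℕ)) []) := by
  have hex (r : List ℕ) : (∃ x : Fin (m + 1), (x : ℕ) ∈ r) ↔ ∃ x ∈ r, x ≤ m :=
    ⟨fun ⟨x, hx⟩ => ⟨x, hx, x.is_le⟩, fun ⟨x, hx, hm⟩ => ⟨⟨x, Nat.lt_succ_of_le hm⟩, hx⟩⟩
  simp only [decodeNMat, validRow, hex]
  split_ifs <;> simp

theorem mem_decodeNMat_tables_interp {ar : List ℕ} {m : ℕ} {f : ℕ → List ℕ → List ℕ}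
    {ds : List ℕ} {j : Fin ar.length} {args : Fin (ar.get j) → Fin (m + 1)} {y : Fin (m + 1)} :
    y ∈ (decodeNMat ar m (tables ar (m + 1) f) ds).interp j args ↔
      (y : ℕ) ∈ validRow m (f j (List.ofFn fun i => (args i : ℕ))) := by
  rw [mem_decodeNMat_interp, getD_tables, getD_tabulate]

section TildeCode

/-- The two copies `2 * x` and `2 * x + 1` of each value `x` listed in `r`. -/
def copies (r : List ℕ) : List ℕ :=
  r.flatMap fun x => [2 * x, 2 * x + 1]

theorem mem_copies {r : List ℕ} {y : ℕ} : y ∈ copies r ↔ y / 2 ∈ r := by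
  simp only [copies, List.mem_flatMap, List.mem_cons, List.not_mem_nil, or_false]
  refine ⟨fun ⟨x, hx, hy⟩ => ?_, fun h => ⟨y / 2, h, by lia⟩⟩
  rwa [show y / 2 = x by lia]

theorem validRow_copies {m : ℕ} {r : List ℕ} (h : ∃ x ∈ r, x ≤ m) :
    validRow (2 * m + 1) (copies r) = copies r := by
  obtain ⟨x, hx, hxm⟩ := h
  exact if_pos ⟨2 * x, mem_copies.2 (by simpa using hx), by lia⟩

/-- The tilde-forgetful map of a tilde code: `2 * x` and `2 * x + 1` are the copies of `x`. -/
def half {m : ℕ} (y : Fin (2 * m + 1 + 1)) : Fin (m + 1) := ⟨y / 2, by lia⟩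

/-- The outputs, on the tuple `l` of values of the tilded matrix, of the `j`-th connective of the
tilde of a matrix with tables `tbl`. -/
def tildeEntry (m : ℕ) (tbl : List (List (List ℕ))) (j : ℕ) (l : List ℕ) : List ℕ :=
  copies (validRow m ((tbl.getD j []).getD (Nat.ofDigits (m + 1) (l.map (· / 2))) []))

/-- The designated values of the tilde of a matrix with designated values `ds`: all odd copies, and
the even copies of designated values. -/
def tildeDesignated (m : ℕ) (ds : List ℕ) : List ℕ :=
  (List.range (m + 1)).map (2 * · + 1) ++ ds.map (2 * ·)

/-- The code of a tilded version of the matrix coded by `c`, without its signature. -/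
def tildeCode (c : NMatCode) : ℕ × List (List (List ℕ)) × List ℕ :=
  (2 * c.2.1 + 1, tables c.1 (2 * c.2.1 + 1 + 1) (tildeEntry c.2.1 c.2.2.1),
    tildeDesignated c.2.1 c.2.2.2)

theorem mem_tildeDesignated {m : ℕ} {ds : List ℕ} {y : Fin (2 * m + 1 + 1)} :
    (y : ℕ) ∈ tildeDesignated m ds ↔ (y : ℕ) % 2 = 1 ∨ (half y : ℕ) ∈ ds := by
  simp only [tildeDesignated, List.mem_append, List.mem_map, List.mem_range, half]
  constructor
  · rintro (⟨x, -, hx⟩ | ⟨x, hx, hxy⟩)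
    · exact Or.inl (by lia)
    · exact Or.inr (by rwa [show (y : ℕ) / 2 = x by lia])
  · intro h
    rcases Nat.mod_two_eq_zero_or_one y with hy | hy
    · exact Or.inr ⟨y / 2, h.resolve_left (by lia), by lia⟩
    · exact Or.inl ⟨y / 2, by lia, by lia⟩

theorem isTilde_tildeCode (ar : List ℕ) (m : ℕ) (tbl : List (List (List ℕ))) (ds : List ℕ) :
    (decodeNMat ar (2 * m + 1) (tables ar (2 * m + 1 + 1) (tildeEntry m tbl))
      (tildeDesignated m ds)).IsTilde (decodeNMat ar m tbl ds) half where
  interp_eq j args := by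
    ext y
    have hdigits : Nat.ofDigits (m + 1) ((List.ofFn fun i => (args i : ℕ)).map (· / 2)) =
        ∑ i, ((half ∘ args) i : ℕ) * (m + 1) ^ (i : ℕ) := by
      rw [List.map_ofFn, ofDigits_ofFn]
      rfl
    rw [mem_decodeNMat_tables_interp, Set.mem_preimage, mem_decodeNMat_interp, tildeEntry,
      validRow_copies (exists_mem_validRow _ _), mem_copies, hdigits]
    rfl
  image_D := by
    refine Set.eq_univ_of_forall fun x => ⟨⟨2 * x + 1, by lia⟩, ?_, Fin.ext ?_⟩
    · exact mem_tildeDesignated.2 (Or.inl (by simp))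
    · simp only [half]
      lia
  image_compl_D := by
    ext x
    simp only [decodeNMat, Set.mem_image, Set.mem_compl_iff, Set.mem_ofPred_eq, mem_tildeDesignated,
      not_or]
    constructor
    · rintro ⟨y, ⟨-, hy⟩, rfl⟩
      exact hy
    · intro hx
      have hhalf : half ⟨2 * (x : ℕ), by lia⟩ = x := Fin.ext (by simp [half])
      exact ⟨⟨2 * x, by lia⟩, ⟨by simp, by rwa [hhalf]⟩, hhalf⟩

/-- The code of the unconstrained Nmatrix with connectives of arities `ar`, without its
signature. -/
def unconstrainedCode (ar : List ℕ) : ℕ × List (List (List ℕ)) × List ℕ :=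
  (1, tables ar 2 fun _ _ => [0, 1], [1])

theorem decodeNMat_unconstrainedCode (ar : List ℕ) :
    decodeNMat ar 1 (tables ar 2 fun _ _ => [0, 1]) [1] = NMatrix.unconstrained (codeSig ar) := by
  refine NMatrix.ext ?_ ?_
  · ext x
    fin_cases x <;> simp [decodeNMat, NMatrix.unconstrained]
  · funext j args
    ext y
    rw [mem_decodeNMat_tables_interp (m := 1)]
    fin_cases y <;> simp [validRow, NMatrix.unconstrained]

/-- The reduction of theorem existence to (in)equivalence: the tilded matrix against the
unconstrained one. -/
def tildePair (c : NMatCode) : EqvCode :=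
  (c.1, tildeCode c, unconstrainedCode c.1)

theorem eqvProblem_tildePair (c : NMatCode) : eqvProblem (tildePair c) ↔ ¬ thmExistsProblem c := by
  obtain ⟨ar, m, tbl, ds⟩ := c
  have h := (isTilde_tildeCode ar m tbl ds).forall_entails_iff_unconstrained
  rw [← decodeNMat_unconstrainedCode] at h
  exact h

theorem primrec_copies : Primrec copies :=
  Primrec.list_flatMap Primrec.id
    (Primrec.list_cons.comp (Primrec.nat_double.comp Primrec.snd)
      (Primrec.list_cons.comp (Primrec.nat_double_succ.comp Primrec.snd)
        (Primrec.const []))).to₂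

theorem primrec_tildeEntry : Primrec fun p : (NMatCode × ℕ) × List ℕ =>
    tildeEntry p.1.1.2.1 p.1.1.2.2.1 p.1.2 p.2 := by
  have hm : Primrec fun p : (NMatCode × ℕ) × List ℕ => p.1.1.2.1 :=
    Primrec.fst.comp (Primrec.snd.comp (Primrec.fst.comp Primrec.fst))
  have htbl : Primrec fun p : (NMatCode × ℕ) × List ℕ => p.1.1.2.2.1 :=
    Primrec.fst.comp (Primrec.snd.comp (Primrec.snd.comp (Primrec.fst.comp Primrec.fst)))
  have hindex : Primrec fun p : (NMatCode × ℕ) × List ℕ =>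
      Nat.ofDigits (p.1.1.2.1 + 1) (p.2.map (· / 2)) :=
    primrec₂_ofDigits.comp (Primrec.succ.comp hm)
      (Primrec.list_map Primrec.snd
        (Primrec.nat_div.comp Primrec.snd (Primrec.const 2)).to₂)
  exact primrec_copies.comp (primrec₂_validRow.comp hm ((Primrec.list_getD []).comp
    ((Primrec.list_getD []).comp htbl (Primrec.snd.comp Primrec.fst)) hindex))

theorem primrec_tildeDesignated : Primrec₂ tildeDesignated :=
  Primrec.list_append.comp
    (Primrec.list_map (Primrec.list_range.comp (Primrec.succ.comp Primrec.fst))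
      (Primrec.nat_double_succ.comp Primrec.snd).to₂)
    (Primrec.list_map Primrec.snd (Primrec.nat_double.comp Primrec.snd).to₂)

theorem primrec_tildePair : Primrec tildePair := by
  have hm : Primrec fun c : NMatCode => c.2.1 := Primrec.fst.comp Primrec.snd
  have htilde : Primrec tildeCode :=
    (Primrec.nat_double_succ.comp hm).pair
      ((primrec_tables Primrec.fst (Primrec.succ.comp (Primrec.nat_double_succ.comp hm))
          primrec_tildeEntry).pair
        (primrec_tildeDesignated.comp hm (Primrec.snd.comp (Primrec.snd.comp Primrec.snd))))
  have hunconstrained : Primrec unconstrainedCode :=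
    (Primrec.const 1).pair
      ((primrec_tables Primrec.id (Primrec.const 2) (Primrec.const [0, 1])).pair
        (Primrec.const [1]))
  exact Primrec.fst.pair (htilde.pair (hunconstrained.comp Primrec.fst))

theorem computablePred_thmExistsProblem_of_eqvProblem (h : ComputablePred eqvProblem) :
    ComputablePred thmExistsProblem := by
  have hreduce : (fun c => ¬ thmExistsProblem c) ≤₀ eqvProblem :=
    ⟨tildePair, primrec_tildePair.to_comp, fun c => (eqvProblem_tildePair c).symm⟩
  exact (ComputablePred.computable_of_manyOneReducible hreduce h).not.of_eq fun _ => not_not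

end TildeCode

section Code

namespace Fm

variable {S T : Signature}

/-- Renaming of the connectives of a formula along an arity-preserving map of signatures. -/
def map (f : S.Conn → T.Conn) (hf : ∀ c, T.arity (f c) = S.arity c) : Fm S → Fm T
  | var i => var i
  | app c args => app (f c) fun i => map f hf (args (Fin.cast (hf c) i))

end Fm

namespace NMatrix

variable {S T : Signature} {V W : Type}

theorem entails_empty_map {M : NMatrix S V} {N : NMatrix T W} (f : S.Conn → T.Conn)
    (hf : ∀ c, T.arity (f c) = S.arity c) (g : W → V)
    (hinterp : ∀ c args, ∀ y ∈ N.interp (f c) args,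
      g y ∈ M.interp c fun i => g (args (Fin.cast (hf c).symm i)))
    (hD : ∀ y, g y ∈ M.D → y ∈ N.D) {A : Fm S} (hA : Entails M ∅ A) :
    Entails N ∅ (A.map f hf) := by
  intro v hv _
  refine hD _ (hA (fun B => g (v (B.map f hf))) (fun c args => ?_) (by simp))
  exact hinterp c _ _ (hv (f c) fun i => (args (Fin.cast (hf c) i)).map f hf)

variable {k m : ℕ}

open Classical in
/-- The codes of the members of `s` under an enumeration `e` of the values. -/
noncomputable def valueCodes (e : V ≃ Fin (m + 1)) (s : Set V) : List ℕ :=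
  ((List.finRange (m + 1)).filter fun y => e.symm y ∈ s).map Fin.val

theorem mem_valueCodes {e : V ≃ Fin (m + 1)} {s : Set V} {y : Fin (m + 1)} :
    (y : ℕ) ∈ valueCodes e s ↔ e.symm y ∈ s := by
  simp [valueCodes, Fin.val_inj]

theorem validRow_valueCodes {e : V ≃ Fin (m + 1)} {s : Set V} (hs : s.Nonempty) :
    validRow m (valueCodes e s) = valueCodes e s := by
  obtain ⟨x, hx⟩ := hs
  exact if_pos ⟨e x, mem_valueCodes.2 (by simpa using hx), (e x).is_le⟩

/-- The table entry of the connective `c` at the tuple coded by the list `l`. -/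
noncomputable def entry (M : NMatrix S V) (e : V ≃ Fin (m + 1)) (c : S.Conn) (l : List ℕ) :
    List ℕ :=
  valueCodes e (M.interp c fun i => e.symm (Fin.ofNat (m + 1) (l.getD i 0)))

/-- The code of a finite Nmatrix under enumerations of its connectives and of its values. -/
noncomputable def code (M : NMatrix S V) (σ : S.Conn ≃ Fin k) (e : V ≃ Fin (m + 1)) : NMatCode :=
  (List.ofFn fun j => S.arity (σ.symm j), m,
    List.ofFn fun j => tabulate (m + 1) (S.arity (σ.symm j)) (M.entry e (σ.symm j)),
    valueCodes e M.D)

theorem entry_ofFn (M : NMatrix S V) (e : V ≃ Fin (m + 1)) (c : S.Conn) {n : ℕ}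
    (hn : n = S.arity c) (args : Fin n → Fin (m + 1)) :
    M.entry e c (List.ofFn fun i => (args i : ℕ)) =
      valueCodes e (M.interp c fun i => e.symm (args (Fin.cast hn.symm i))) := by
  subst hn
  simp [entry]

theorem length_code (M : NMatrix S V) (σ : S.Conn ≃ Fin k) (e : V ≃ Fin (m + 1)) :
    (M.code σ e).1.length = k :=
  List.length_ofFn

theorem get_code (M : NMatrix S V) (σ : S.Conn ≃ Fin k) (e : V ≃ Fin (m + 1))
    {j : Fin (M.code σ e).1.length} {c : S.Conn} (hc : σ c = Fin.cast (M.length_code σ e) j) :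
    (M.code σ e).1.get j = S.arity c := by
  rw [σ.eq_symm_apply.2 hc]
  exact List.get_ofFn ..

theorem mem_decodeNMat_code_interp (M : NMatrix S V) (σ : S.Conn ≃ Fin k) (e : V ≃ Fin (m + 1))
    {j : Fin (M.code σ e).1.length} {c : S.Conn} (hc : σ c = Fin.cast (M.length_code σ e) j)
    {args : Fin ((M.code σ e).1.get j) → Fin (m + 1)} {y : Fin (m + 1)} :
    y ∈ (decodeNMat (M.code σ e).1 m (M.code σ e).2.2.1 (M.code σ e).2.2.2).interp j args ↔
      e.symm y ∈ M.interp c fun i => e.symm (args (Fin.cast (M.get_code σ e hc).symm i)) := by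
  have hlen : (j : ℕ) < k := (Fin.cast (M.length_code σ e) j).isLt
  have hrow : (M.code σ e).2.2.1.getD j [] =
      tabulate (m + 1) ((M.code σ e).1.get j) (M.entry e c) := by
    rw [M.get_code σ e hc, σ.eq_symm_apply.2 hc]
    exact (List.getD_eq_getElem _ _ (by simpa [code] using hlen)).trans (List.getElem_ofFn ..)
  rw [mem_decodeNMat_interp, hrow, getD_tabulate, entry_ofFn M e c (M.get_code σ e hc),
    validRow_valueCodes (M.interp_nonempty _ _), mem_valueCodes]

theorem thmExistsProblem_code (M : NMatrix S V) (σ : S.Conn ≃ Fin k) (e : V ≃ Fin (m + 1)) :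
    thmExistsProblem (M.code σ e) ↔ ∃ A, Entails M ∅ A := by
  have hlen := M.length_code σ e
  constructor
  · rintro ⟨A, hA⟩
    let conn (j : Fin (M.code σ e).1.length) : S.Conn := σ.symm (Fin.cast hlen j)
    have hconn (j) : σ (conn j) = Fin.cast hlen j := σ.apply_symm_apply _
    refine ⟨_, entails_empty_map conn (fun j => (M.get_code σ e (hconn j)).symm) e
      (fun j args y hy => (M.mem_decodeNMat_code_interp σ e (hconn j)).2 ?_)
      (fun y hy => ?_) hA⟩
    · simpa using hy
    · simpa using mem_valueCodes.1 hy
  · rintro ⟨A, hA⟩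
    let conn (c : S.Conn) : Fin (M.code σ e).1.length := Fin.cast hlen.symm (σ c)
    have hconn (c) : σ c = Fin.cast hlen (conn c) := rfl
    exact ⟨_, entails_empty_map (T := codeSig (M.code σ e).1) conn
      (fun c => M.get_code σ e (hconn c)) e.symm
      (fun c _ _ => (M.mem_decodeNMat_code_interp σ e (hconn c)).1)
      (fun _ hy => mem_valueCodes.2 hy) hA⟩

section Primrec

variable {α : Type} [Primcodable α] {e : V ≃ Fin (m + 1)}

theorem primrec_valueCodes {s : α → Set V} (hs : ∀ x, PrimrecPred fun a => x ∈ s a) :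
    Primrec fun a => valueCodes e (s a) := by
  classical
  have hmem : PrimrecRel fun (y : Fin (m + 1)) a => e.symm y ∈ s a :=
    ⟨inferInstance, Primrec.fin_curry₁.2 fun y => (hs (e.symm y)).decide⟩
  refine Primrec.list_map ?_ (Primrec.fin_val.comp Primrec.snd).to₂
  exact hmem.listFilter.comp (Primrec.const (List.finRange (m + 1))) Primrec.id

theorem primrec_code {C : Type} {ar : α → C → ℕ} (M : ∀ a, NMatrix ⟨C, ar a⟩ V) (σ : C ≃ Fin k)
    (har : ∀ c, Primrec fun a => ar a c)
    (hinterp : ∀ c x, PrimrecPred fun p : α × List ℕ =>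
      x ∈ (M p.1).interp c fun i => e.symm (Fin.ofNat (m + 1) (p.2.getD i 0)))
    (hD : ∀ x, PrimrecPred fun a => x ∈ (M a).D) :
    Primrec fun a => (M a).code σ e :=
  (Primrec.list_ofFn fun j => har (σ.symm j)).pair ((Primrec.const m).pair
    ((Primrec.list_ofFn fun j => primrec_tabulate (Primrec.const _) (har _)
      (primrec_valueCodes (hinterp (σ.symm j))).to₂).pair (primrec_valueCodes hD)))

theorem primrecPred_finite {n : ℕ} (P : (Fin n → V) → Prop) {f : Fin n → α → ℕ}
    (hf : ∀ i, Primrec (f i)) :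
    PrimrecPred fun a => P fun i => e.symm (Fin.ofNat (m + 1) (f i a)) := by
  classical
  have hofNat : Primrec (Fin.ofNat (m + 1)) :=
    Primrec.fin_val_iff.1 (Primrec.nat_mod.comp Primrec.id (Primrec.const (m + 1)))
  have hargs : Primrec fun (a : α) (i : Fin n) => Fin.ofNat (m + 1) (f i a) :=
    Primrec.fin_curry.2 (Primrec.fin_curry₁.2 fun i => hofNat.comp (hf i)).swap
  exact ⟨inferInstance, (Primrec.dom_finite fun args : Fin n → Fin (m + 1) =>
    decide (P fun i => e.symm (args i))).comp hargs⟩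

end Primrec

end NMatrix

end Code

/-- Binary trees, the terms over which the Horn clauses below speak. -/
inductive Tree2 : Type where
  | nil
  | pair (s t : Tree2)

namespace Tree2

/-- The left component, with `nil` as its own component. -/
def hd : Tree2 → Tree2
  | nil => nil
  | pair s _ => s

/-- The right component, with `nil` as its own component. -/
def tl : Tree2 → Tree2
  | nil => nil
  | pair _ t => t

/-- The numeral of `n`, chosen so that the numeral of `n + 1` is the list `[n]`. -/
def num : ℕ → Tree2
  | 0 => nil
  | n + 1 => pair (num n) nil

/-- The tree coding a list of numbers. -/
def ofList : List ℕ → Tree2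
  | [] => nil
  | n :: l => pair (num n) (ofList l)

theorem hd_ofList (l : List ℕ) : (ofList l).hd = num l.headI := by
  cases l <;> rfl

theorem tl_ofList (l : List ℕ) : (ofList l).tl = ofList l.tail := by
  cases l <;> rfl

theorem num_eq_nil {n : ℕ} : num n = nil ↔ n = 0 := by
  cases n <;> simp [num]

theorem num_eq_pair {n : ℕ} {s t : Tree2} :
    num n = pair s t ↔ ∃ k, n = k + 1 ∧ num k = s ∧ nil = t := by
  cases n <;> simp [num]

end Tree2

/-- The constraints allowed in the body of a Horn clause with variables `x 0, …, x 6`. -/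
inductive Check : Type where
  | nil (i : Fin 7)
  | pair (i j k : Fin 7)
  | hd (i j : Fin 7)
  | tl (i j : Fin 7)

/-- The constraint is satisfied by the assignment `x`. -/
def Check.Holds (x : Fin 7 → Tree2) : Check → Prop
  | nil i => x i = .nil
  | pair i j k => x i = .pair (x j) (x k)
  | hd i j => (x i).hd = x j
  | tl i j => (x i).tl = x j

/-- A constrained Horn clause `concl (x 0, x 1) ← checks, prems` for binary predicates from `Q` on
trees, where the premise `(q, i, j)` stands for `q (x i, x j)`. -/
structure HornRule (Q : Type) where
  concl : Q
  checks : List Check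
  prems : List (Q × Fin 7 × Fin 7)

section Horn

variable {Q : Type}

/-- The body of the clause is satisfiable with head variables `s`, `t` when its predicates are
interpreted by `P`. -/
def HornRule.Fires (r : HornRule Q) (P : Q → Tree2 → Tree2 → Prop) (s t : Tree2) : Prop :=
  ∃ x : Fin 7 → Tree2, x 0 = s ∧ x 1 = t ∧ (∀ c ∈ r.checks, c.Holds x) ∧
    ∀ p ∈ r.prems, P p.1 (x p.2.1) (x p.2.2)

/-- The least model of a list of Horn clauses. -/
inductive Derives (R : List (HornRule Q)) : Q → Tree2 → Tree2 → Prop where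
  | intro (r : HornRule Q) (hr : r ∈ R) (x : Fin 7 → Tree2) (hchecks : ∀ c ∈ r.checks, c.Holds x)
      (hprems : ∀ p ∈ r.prems, Derives R p.1 (x p.2.1) (x p.2.2)) :
      Derives R r.concl (x 0) (x 1)

namespace Derives

variable {R : List (HornRule Q)} {r : HornRule Q} {q : Q} {s t : Tree2}

theorem of_fires (hr : r ∈ R) (h : r.Fires (Derives R) s t) : Derives R r.concl s t := by
  obtain ⟨x, rfl, rfl, hchecks, hprems⟩ := h
  exact intro r hr x hchecks hprems

theorem of_closed {P : Q → Tree2 → Tree2 → Prop}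
    (hP : ∀ r ∈ R, ∀ s t, r.Fires P s t → P r.concl s t) (h : Derives R q s t) : P q s t := by
  induction h with
  | intro r hr x hchecks _ ih => exact hP r hr _ _ ⟨x, rfl, rfl, hchecks, ih⟩

end Derives

end Horn

section Simulation

open Turing.ToPartrec Tree2

theorem mem_eval_cons {f fs : Code} {v w : List ℕ} :
    w ∈ (Code.cons f fs).eval v ↔ ∃ n ∈ f.eval v, ∃ ns ∈ fs.eval v, w = n.headI :: ns := by
  simp [Part.bind_eq_bind, Part.pure_eq_some]

theorem mem_eval_comp {f g : Code} {v w : List ℕ} :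
    w ∈ (Code.comp f g).eval v ↔ ∃ u ∈ g.eval v, w ∈ f.eval u := by
  rw [Code.comp_eval]
  exact Part.mem_bind_iff

theorem mem_eval_case {f g : Code} {v w : List ℕ} :
    w ∈ (Code.case f g).eval v ↔
      (v.headI = 0 ∧ w ∈ f.eval v.tail) ∨ ∃ y, v.headI = y + 1 ∧ w ∈ g.eval (y :: v.tail) := by
  rw [Code.case_eval]
  beta_reduce
  generalize v.headI = k
  cases k <;> simp

/-- The loop body of `Code.fix f`. -/
def fixBody (f : Code) : List ℕ →. List ℕ ⊕ List ℕ := fun v =>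
  (f.eval v).map fun u => if u.headI = 0 then Sum.inl u.tail else Sum.inr u.tail

theorem inl_mem_fixBody {f : Code} {v w : List ℕ} :
    Sum.inl w ∈ fixBody f v ↔ ∃ u ∈ f.eval v, u.headI = 0 ∧ u.tail = w := by
  simp only [fixBody, Part.mem_map_iff]
  refine exists_congr fun u => and_congr_right fun _ => ?_
  split_ifs with h <;> simp [h]

theorem inr_mem_fixBody {f : Code} {v w : List ℕ} :
    Sum.inr w ∈ fixBody f v ↔ ∃ u ∈ f.eval v, u.headI ≠ 0 ∧ u.tail = w := by
  simp only [fixBody, Part.mem_map_iff]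
  refine exists_congr fun u => and_congr_right fun _ => ?_
  split_ifs with h <;> simp [h]

theorem mem_eval_fix {f : Code} {v w : List ℕ} :
    w ∈ (Code.fix f).eval v ↔ ∃ u ∈ f.eval v,
      (u.headI = 0 ∧ u.tail = w) ∨ (u.headI ≠ 0 ∧ w ∈ (Code.fix f).eval u.tail) := by
  have hfix : (Code.fix f).eval = (fixBody f).fix := Code.fix_eval f
  rw [hfix, PFun.mem_fix_iff, inl_mem_fixBody]
  simp only [inr_mem_fixBody]
  grind

theorem eval_fix_induction {f : Code} {w : List ℕ} {P : List ℕ → Prop}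
    (hdone : ∀ v, ∀ u ∈ f.eval v, u.headI = 0 → u.tail = w → P v)
    (hloop : ∀ v, ∀ u ∈ f.eval v, u.headI ≠ 0 → P u.tail → P v) {v : List ℕ}
    (h : w ∈ (Code.fix f).eval v) : P v := by
  have hfix : (Code.fix f).eval = (fixBody f).fix := Code.fix_eval f
  rw [hfix] at h
  refine PFun.fixInduction' h (fun v hv => ?_) fun v v' _ hv' ih => ?_
  · obtain ⟨u, hu, h0, hw⟩ := inl_mem_fixBody.1 hv
    exact hdone v u hu h0 hw
  · obtain ⟨u, hu, h0, rfl⟩ := inr_mem_fixBody.1 hv'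
    exact hloop v u hu h0 ih

/-- The Horn clauses of the big-step semantics of one code constructor. The predicates are the
codes themselves, `c (s, t)` stating that `c` evaluates the list coded by `s` to that of `t`. -/
def codeRules : Code → List (HornRule Code)
  | .zero' => [⟨.zero', [.nil 2, .pair 1 2 0], []⟩]
  | .succ => [⟨.succ, [.hd 0 2, .nil 4, .pair 3 2 4, .pair 1 3 4], []⟩]
  | .tail => [⟨.tail, [.tl 0 1], []⟩]
  | .cons f fs => [⟨.cons f fs, [.hd 2 4, .pair 1 4 3], [(f, 0, 2), (fs, 0, 3)]⟩]
  | .comp f g => [⟨.comp f g, [], [(g, 0, 2), (f, 2, 1)]⟩]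
  | .case f g =>
      [⟨.case f g, [.hd 0 2, .nil 2, .tl 0 3], [(f, 3, 1)]⟩,
        ⟨.case f g, [.hd 0 2, .pair 2 3 6, .tl 0 4, .pair 5 3 4], [(g, 5, 1)]⟩]
  | .fix f =>
      [⟨.fix f, [.hd 2 3, .nil 3, .tl 2 1], [(f, 0, 2)]⟩,
        ⟨.fix f, [.hd 2 3, .pair 3 5 6, .tl 2 4], [(f, 0, 2), (.fix f, 4, 1)]⟩]

theorem concl_of_mem_codeRules {c : Code} {r : HornRule Code} (h : r ∈ codeRules c) :
    r.concl = c := by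
  cases c <;> simp only [codeRules, List.mem_cons, List.not_mem_nil, or_false] at h
  case case | fix => rcases h with rfl | rfl <;> rfl
  all_goals rw [h]

/-- One unfolding of the big-step semantics of a code, read off on trees: `P` interprets the
evaluations in the premises. -/
def EvalStep (P : Code → Tree2 → Tree2 → Prop) : Code → Tree2 → Tree2 → Prop
  | .zero', s, t => t = pair nil s
  | .succ, s, t => t = pair (pair s.hd nil) nil
  | .tail, s, t => t = s.tl
  | .cons f fs, s, t => ∃ u v, P f s u ∧ P fs s v ∧ t = pair u.hd v
  | .comp f g, s, t => ∃ u, P g s u ∧ P f u t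
  | .case f g, s, t =>
      (s.hd = nil ∧ P f s.tl t) ∨ ∃ a b, s.hd = pair a b ∧ P g (pair a s.tl) t
  | .fix f, s, t => ∃ u, P f s u ∧
      ((u.hd = nil ∧ t = u.tl) ∨ ∃ a b, u.hd = pair a b ∧ P (.fix f) u.tl t)

theorem evalStep_of_fires {P : Code → Tree2 → Tree2 → Prop} {c : Code} {r : HornRule Code}
    {s t : Tree2} (hr : r ∈ codeRules c) (h : r.Fires P s t) : EvalStep P c s t := by
  obtain ⟨x, rfl, rfl, hchecks, hprems⟩ := h
  cases c <;> simp only [codeRules, List.mem_cons, List.not_mem_nil, or_false] at hr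
  case case | fix =>
    rcases hr with rfl | rfl <;>
      simp only [List.forall_mem_cons, Check.Holds] at hchecks hprems <;>
      simp only [EvalStep] <;> grind
  all_goals
    subst hr
    simp only [List.forall_mem_cons, Check.Holds] at hchecks hprems
    simp only [EvalStep]
    grind

theorem exists_fires_of_evalStep {P : Code → Tree2 → Tree2 → Prop} {c : Code} {s t : Tree2}
    (h : EvalStep P c s t) : ∃ r ∈ codeRules c, r.Fires P s t := by
  cases c with simp only [EvalStep] at h
  | zero' => exact ⟨_, .head _, ![s, t, nil, nil, nil, nil, nil], by simp [Check.Holds, h]⟩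
  | succ =>
    exact ⟨_, .head _, ![s, t, s.hd, pair s.hd nil, nil, nil, nil], by simp [Check.Holds, h]⟩
  | tail => exact ⟨_, .head _, ![s, t, nil, nil, nil, nil, nil], by simp [Check.Holds, h]⟩
  | cons f fs =>
    obtain ⟨u, v, hu, hv, rfl⟩ := h
    exact ⟨_, .head _, ![s, pair u.hd v, u, v, u.hd, nil, nil], by simp [Check.Holds, hu, hv]⟩
  | comp f g =>
    obtain ⟨u, hu, ht⟩ := h
    exact ⟨_, .head _, ![s, t, u, nil, nil, nil, nil], by simp [hu, ht]⟩
  | case f g =>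
    rcases h with ⟨h0, ht⟩ | ⟨a, b, hab, ht⟩
    · exact ⟨_, .head _, ![s, t, nil, s.tl, nil, nil, nil], by simp [Check.Holds, h0, ht]⟩
    · exact ⟨_, .tail _ (.head _), ![s, t, pair a b, a, s.tl, pair a s.tl, b],
        by simp [Check.Holds, hab, ht]⟩
  | fix f =>
    obtain ⟨u, hu, ⟨h0, rfl⟩ | ⟨a, b, hab, ht⟩⟩ := h
    · exact ⟨_, .head _, ![s, u.tl, u, nil, nil, nil, nil], by simp [Check.Holds, h0, hu]⟩
    · exact ⟨_, .tail _ (.head _), ![s, t, u, pair a b, u.tl, a, b],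
        by simp [Check.Holds, hab, hu, ht]⟩

/-- The evaluation relation of a code on trees, constrained only on trees coding lists. -/
def EvalsTree (c : Code) (s t : Tree2) : Prop :=
  ∀ v, s = ofList v → ∃ w ∈ c.eval v, t = ofList w

theorem evalsTree_of_evalStep {c : Code} {s t : Tree2} (h : EvalStep EvalsTree c s t) :
    EvalsTree c s t := by
  rintro v rfl
  cases c with simp only [EvalStep, hd_ofList, tl_ofList] at h
  | zero' => exact ⟨0 :: v, by simp, h⟩
  | succ => exact ⟨[v.headI.succ], by simp, h⟩
  | tail => exact ⟨v.tail, by simp, h⟩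
  | cons f fs =>
    obtain ⟨_, _, hf, hfs, rfl⟩ := h
    obtain ⟨n, hn, rfl⟩ := hf v rfl
    obtain ⟨ns, hns, rfl⟩ := hfs v rfl
    exact ⟨n.headI :: ns, mem_eval_cons.2 ⟨n, hn, ns, hns, rfl⟩, by rw [hd_ofList]; rfl⟩
  | comp f g =>
    obtain ⟨_, hg, hf⟩ := h
    obtain ⟨u, hu, rfl⟩ := hg v rfl
    obtain ⟨w, hw, rfl⟩ := hf u rfl
    exact ⟨w, mem_eval_comp.2 ⟨u, hu, hw⟩, rfl⟩
  | case f g =>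
    rcases h with ⟨h0, hf⟩ | ⟨a, b, hab, hg⟩
    · obtain ⟨w, hw, rfl⟩ := hf v.tail rfl
      exact ⟨w, mem_eval_case.2 (Or.inl ⟨num_eq_nil.1 h0, hw⟩), rfl⟩
    · obtain ⟨y, hy, rfl, -⟩ := num_eq_pair.1 hab
      obtain ⟨w, hw, rfl⟩ := hg (y :: v.tail) rfl
      exact ⟨w, mem_eval_case.2 (Or.inr ⟨y, hy, hw⟩), rfl⟩
  | fix f =>
    obtain ⟨_, hf, h⟩ := h
    obtain ⟨u, hu, rfl⟩ := hf v rfl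
    rw [hd_ofList, tl_ofList] at h
    rcases h with ⟨h0, rfl⟩ | ⟨a, b, hab, hfix⟩
    · exact ⟨u.tail, mem_eval_fix.2 ⟨u, hu, Or.inl ⟨num_eq_nil.1 h0, rfl⟩⟩, rfl⟩
    · obtain ⟨y, hy, -⟩ := num_eq_pair.1 hab
      obtain ⟨w, hw, rfl⟩ := hfix u.tail rfl
      exact ⟨w, mem_eval_fix.2 ⟨u, hu, Or.inr ⟨by simp [hy], hw⟩⟩, rfl⟩

/-- The Horn clauses of a code and of all its subcodes. -/
def subcodeRules : Code → List (HornRule Code)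
  | .cons f fs => codeRules (.cons f fs) ++ (subcodeRules f ++ subcodeRules fs)
  | .comp f g => codeRules (.comp f g) ++ (subcodeRules f ++ subcodeRules g)
  | .case f g => codeRules (.case f g) ++ (subcodeRules f ++ subcodeRules g)
  | .fix f => codeRules (.fix f) ++ subcodeRules f
  | c => codeRules c

theorem codeRules_subset_subcodeRules (c : Code) : codeRules c ⊆ subcodeRules c := by
  cases c <;> simp [subcodeRules]

theorem mem_codeRules_concl {c : Code} {r : HornRule Code} (h : r ∈ subcodeRules c) :
    r ∈ codeRules r.concl := by
  have hself {c} (h : r ∈ codeRules c) : r ∈ codeRules r.concl := by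
    rwa [concl_of_mem_codeRules h]
  induction c with
  | zero' | succ | tail => exact hself h
  | cons f g hf hg | comp f g hf hg | case f g hf hg =>
    rcases List.mem_append.1 h with h | h
    · exact hself h
    · exact (List.mem_append.1 h).elim hf hg
  | fix f hf => exact (List.mem_append.1 h).elim hself hf

theorem evalsTree_of_derives {c d : Code} {s t : Tree2} (h : Derives (subcodeRules c) d s t) :
    EvalsTree d s t :=
  h.of_closed fun _ hr _ _ hfires =>
    evalsTree_of_evalStep (evalStep_of_fires (mem_codeRules_concl hr) hfires)

theorem derives_of_evalStep {R : List (HornRule Code)} {c : Code} {s t : Tree2}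
    (hR : subcodeRules c ⊆ R) (h : EvalStep (Derives R) c s t) : Derives R c s t := by
  obtain ⟨r, hr, hfires⟩ := exists_fires_of_evalStep h
  have hrR : r ∈ R := hR (codeRules_subset_subcodeRules c hr)
  exact concl_of_mem_codeRules hr ▸ Derives.of_fires hrR hfires

theorem derives_of_mem_eval {R : List (HornRule Code)} {c : Code} (hR : subcodeRules c ⊆ R)
    {v w : List ℕ} (h : w ∈ c.eval v) : Derives R c (ofList v) (ofList w) := by
  have hsub := hR
  induction c generalizing v w with simp only [subcodeRules, List.append_subset] at hsub
  | zero' | succ | tail =>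
    obtain rfl : w = _ := by simpa using h
    exact derives_of_evalStep hR (by simp [EvalStep, hd_ofList, tl_ofList, ofList, num])
  | cons f fs hf hfs =>
    obtain ⟨n, hn, ns, hns, rfl⟩ := mem_eval_cons.1 h
    exact derives_of_evalStep hR
      ⟨_, _, hf hsub.2.1 hn hsub.2.1, hfs hsub.2.2 hns hsub.2.2, by rw [hd_ofList]; rfl⟩
  | comp f g hf hg =>
    obtain ⟨u, hu, hw⟩ := mem_eval_comp.1 h
    exact derives_of_evalStep hR ⟨_, hg hsub.2.2 hu hsub.2.2, hf hsub.2.1 hw hsub.2.1⟩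
  | case f g hf hg =>
    rcases mem_eval_case.1 h with ⟨h0, hw⟩ | ⟨y, hy, hw⟩
    · refine derives_of_evalStep hR (Or.inl ⟨?_, ?_⟩)
      · rw [hd_ofList, h0, num]
      · rw [tl_ofList]
        exact hf hsub.2.1 hw hsub.2.1
    · refine derives_of_evalStep hR (Or.inr ⟨num y, nil, ?_, ?_⟩)
      · rw [hd_ofList, hy, num]
      · rw [tl_ofList]
        exact hg hsub.2.2 hw hsub.2.2
  | fix f hf =>
    refine eval_fix_induction (P := fun v => Derives R f.fix (ofList v) (ofList w))
      (fun v u hu h0 hw => ?_) (fun v u hu h0 ih => ?_) h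
    · refine derives_of_evalStep hR ⟨_, hf hsub.2 hu hsub.2, Or.inl ⟨?_, ?_⟩⟩
      · rw [hd_ofList, h0, num]
      · rw [tl_ofList, hw]
    · obtain ⟨y, hy⟩ := Nat.exists_eq_succ_of_ne_zero h0
      refine derives_of_evalStep hR ⟨_, hf hsub.2 hu hsub.2, Or.inr ⟨num y, nil, ?_, ?_⟩⟩
      · rw [hd_ofList, hy, num]
      · rwa [tl_ofList]

theorem exists_derives_subcodeRules_iff {c : Code} {n : ℕ} :
    (∃ t, Derives (subcodeRules c) c (num (n + 1)) t) ↔ (c.eval [n]).Dom := by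
  rw [Part.dom_iff_mem]
  constructor
  · rintro ⟨t, h⟩
    obtain ⟨w, hw, -⟩ := evalsTree_of_derives h [n] rfl
    exact ⟨w, hw⟩
  · rintro ⟨w, hw⟩
    exact ⟨ofList w, derives_of_mem_eval (List.Subset.refl _) hw⟩

theorem exists_not_computablePred_derives : ∃ c : Code,
    ¬ ComputablePred fun n => ∃ t, Derives (subcodeRules c) c (num (n + 1)) t := by
  let halt : ℕ →. ℕ := fun n => Nat.Partrec.Code.eval (Denumerable.ofNat Nat.Partrec.Code n) 0
  have hhalt : Partrec halt :=
    Nat.Partrec.Code.eval_part.comp (Computable.ofNat _) (Computable.const 0)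
  obtain ⟨c, hc⟩ := Code.exists_code (Nat.Partrec'.part_iff₁.2 hhalt)
  refine ⟨c, fun h => ComputablePred.halting_problem 0 ?_⟩
  refine ComputablePred.computable_of_manyOneReducible
    ⟨Encodable.encode, Computable.encode, fun d => ?_⟩ h
  have hd := hc ⟨[Encodable.encode d], rfl⟩
  rw [exists_derives_subcodeRules_iff, hd]
  simp [halt, List.Vector.head]

end Simulation

namespace Tree2

/-- Whether a tree is a pair. -/
def isPair : Tree2 → Bool
  | nil => false
  | pair _ _ => true

theorem eq_of_forall_colouring {s t : Tree2} (h : ∀ β : Tree2 → Bool, β s = β t) : s = t := by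
  classical
  simpa using h fun u => decide (u = t)

end Tree2

/-- What a truth-value records about the tree denoted by a formula: whether it is a pair, and the
values of some Boolean colouring of all trees at the tree and at its two components. A colouring is
a finite amount of information about a tree, but all colourings together determine the tree. -/
structure TreeVal : Type where
  isPair : Bool
  bit : Bool
  left : Bool
  right : Bool
  deriving Fintype

namespace TreeVal

/-- The record of the tree `t` under the colouring `β`. -/
def ofTree (β : Tree2 → Bool) (t : Tree2) : TreeVal :=
  ⟨t.isPair, β t, β t.hd, β t.tl⟩

/-- The record `x` is consistent with denoting `nil`. -/
def IsNil (x : TreeVal) : Prop :=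
  x.isPair = false ∧ x.left = x.bit ∧ x.right = x.bit

/-- The record `x` is consistent with denoting the pair of trees with records `y` and `z`. -/
def IsPairOf (x y z : TreeVal) : Prop :=
  x.isPair = true ∧ x.left = y.bit ∧ x.right = z.bit

theorem forall_isNil_ofTree {t : Tree2} : (∀ β, (ofTree β t).IsNil) ↔ t = .nil := by
  cases t <;> simp [IsNil, ofTree, Tree2.isPair, Tree2.hd, Tree2.tl]

theorem forall_isPairOf_ofTree {t s₁ s₂ : Tree2} :
    (∀ β, (ofTree β t).IsPairOf (ofTree β s₁) (ofTree β s₂)) ↔ t = .pair s₁ s₂ := by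
  constructor
  · intro h
    have hhd : t.hd = s₁ := Tree2.eq_of_forall_colouring fun β => (h β).2.1
    have htl : t.tl = s₂ := Tree2.eq_of_forall_colouring fun β => (h β).2.2
    cases t with
    | nil => simpa [ofTree, Tree2.isPair] using (h fun _ => true).1
    | pair => rw [← hhd, ← htl]; rfl
  · rintro rfl β
    exact ⟨rfl, rfl, rfl⟩

theorem eq_ofTree_nil {β : Tree2 → Bool} {x : TreeVal} (h : x.IsNil) (hbit : x.bit = β .nil) :
    x = ofTree β .nil := by
  obtain ⟨hpair, hleft, hright⟩ := h
  cases x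
  simp_all [ofTree, Tree2.isPair, Tree2.hd, Tree2.tl]

theorem eq_ofTree_pair {β : Tree2 → Bool} {x y z : TreeVal} {s t : Tree2} (h : x.IsPairOf y z)
    (hbit : x.bit = β (.pair s t)) (hy : y.bit = β s) (hz : z.bit = β t) :
    x = ofTree β (.pair s t) := by
  obtain ⟨hpair, hleft, hright⟩ := h
  cases x
  simp_all [ofTree, Tree2.isPair, Tree2.hd, Tree2.tl]

end TreeVal

/-- The truth-value form of `Check.Holds`. -/
def Check.Accepts (y : Fin 7 → TreeVal) : Check → Prop
  | nil i => (y i).IsNil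
  | pair i j k => (y i).IsPairOf (y j) (y k)
  | hd i j => (y i).left = (y j).bit
  | tl i j => (y i).right = (y j).bit

theorem Check.forall_accepts_ofTree {c : Check} {x : Fin 7 → Tree2} :
    (∀ β, c.Accepts fun i => .ofTree β (x i)) ↔ c.Holds x := by
  cases c with
  | nil i => exact TreeVal.forall_isNil_ofTree
  | pair i j k => exact TreeVal.forall_isPairOf_ofTree
  | hd i j => exact ⟨fun h => Tree2.eq_of_forall_colouring h, fun h β => congrArg β h⟩
  | tl i j => exact ⟨fun h => Tree2.eq_of_forall_colouring h, fun h β => congrArg β h⟩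

section HornMatrix

variable {Q : Type} {R : List (HornRule Q)}

variable (R) in
/-- What a truth-value records about the outermost connective of a formula: `prf i b c` is a
correct application of the clause `R[i]` deriving its head predicate for trees of colours `b` and
`c`, and `win` is a correct goal formula. -/
inductive Role : Type where
  | plain
  | win
  | prf (i : Fin R.length) (b c : Bool)

instance : Fintype (Role R) := derive_fintype% _

variable (R) in
/-- The truth-values of the Nmatrix of the clauses `R`. -/
structure HornVal : Type where
  tree : TreeVal
  role : Role R

instance : Fintype (HornVal R) := derive_fintype% _

variable (R) in
/-- The connectives of the Nmatrix of the clauses `R`: tree constructors, one connective for each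
clause, and a connective that turns a derivation of the goal into a theorem. -/
inductive HornConn : Type where
  | nil
  | pair
  | rule (i : Fin R.length)
  | goal

instance : Fintype (HornConn R) := derive_fintype% _

/-- The arities for a goal about the numeral of `k`. A clause takes the values of its variables and
derivations of its premises; `goal` takes the numerals of `0, …, k` and a derivation. -/
abbrev HornConn.arity (k : ℕ) : HornConn R → ℕ
  | nil => 0
  | pair => 2
  | rule i => 7 + (R.get i).prems.length
  | goal => k + 2

variable (R) in
/-- The signature of the Nmatrix of the clauses `R`. -/
abbrev hornSig (k : ℕ) : Signature := ⟨HornConn R, HornConn.arity k⟩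

namespace HornVal

/-- The value `y` is that of a derivation of `q` for trees of colours `b` and `c`. -/
def Proves (y : HornVal R) (q : Q) (b c : Bool) : Prop :=
  ∃ i, (R.get i).concl = q ∧ y.role = .prf i b c

/-- The arguments of `rule i` form a correct application of the clause. -/
def RuleAccepts (i : Fin R.length) (y : Fin (7 + (R.get i).prems.length) → HornVal R) : Prop :=
  let x (j : Fin 7) : TreeVal := (y (.castAdd _ j)).tree
  (∀ c ∈ (R.get i).checks, c.Accepts x) ∧
    ∀ p, let prem := (R.get i).prems.get p
      (y (.natAdd 7 p)).Proves prem.1 (x prem.2.1).bit (x prem.2.2).bit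

/-- The arguments `y 0, …, y (k + 1)` of `goal` are the numerals of `0, …, k` and a derivation of
`q₀` for the last of them. -/
def GoalAccepts (q₀ : Q) (k : ℕ) (y : ℕ → HornVal R) : Prop :=
  (y 0).tree.IsNil ∧ (∀ i < k, (y (i + 1)).tree.IsPairOf (y i).tree (y 0).tree) ∧
    ∃ b, (y (k + 1)).Proves q₀ (y k).tree.bit b

open Classical in
/-- The role of a formula with given outermost connective and argument values. -/
noncomputable def roleOf (q₀ : Q) (k : ℕ) :
    (c : HornConn R) → (Fin (c.arity k) → HornVal R) → Role R
  | .nil, _ => .plain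
  | .pair, _ => .plain
  | .rule i, y => if RuleAccepts i y then
      .prf i (y (.castAdd _ (0 : Fin 7))).tree.bit (y (.castAdd _ (1 : Fin 7))).tree.bit else .plain
  | .goal, y => if GoalAccepts q₀ k fun i => y (Fin.ofNat (k + 2) i) then .win else .plain

/-- The value `x` is consistent with the denotation of a formula with given outermost connective and
argument values, where formulas not built from the tree constructors denote `nil`. -/
def TreeOk (k : ℕ) (x : HornVal R) : (c : HornConn R) → (Fin (c.arity k) → HornVal R) → Prop
  | .pair, y => x.tree.IsPairOf (y (0 : Fin 2)).tree (y (1 : Fin 2)).tree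
  | _, _ => x.tree.IsNil

end HornVal

open HornVal TreeVal Tree2

/-- The tree denoted by a formula. -/
def treeOf {k : ℕ} : Fm (hornSig R k) → Tree2
  | .app .pair args => pair (treeOf (args (0 : Fin 2))) (treeOf (args (1 : Fin 2)))
  | _ => nil

/-- The formula built from the tree constructors that denotes a given tree. -/
def treeFm {k : ℕ} : Tree2 → Fm (hornSig R k)
  | nil => .app .nil Fin.elim0
  | pair s t => .app .pair ![treeFm s, treeFm t]

/-- The value of formulas under the colouring `β` of the trees. -/
noncomputable def valOf (q₀ : Q) {k : ℕ} (β : Tree2 → Bool) : Fm (hornSig R k) → HornVal R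
  | .var _ => ⟨ofTree β nil, .plain⟩
  | .app c args =>
    ⟨ofTree β (treeOf (.app c args)), roleOf q₀ k c fun i => valOf q₀ β (args i)⟩

variable {q₀ : Q} {k : ℕ} {β : Tree2 → Bool}

theorem tree_valOf (A : Fm (hornSig R k)) : (valOf q₀ β A).tree = ofTree β (treeOf A) := by
  cases A <;> simp [valOf, treeOf]

theorem treeOk_valOf (c : HornConn R) (args : Fin (c.arity k) → Fm (hornSig R k)) :
    (valOf q₀ β (.app c args)).TreeOk k c fun i => valOf q₀ β (args i) := by
  cases c <;> simp [TreeOk, tree_valOf, treeOf, IsNil, IsPairOf, ofTree, Tree2.isPair, hd, tl]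

variable (R q₀ k) in
/-- The Nmatrix of the clauses `R` with the goal to derive `q₀` for the numeral of `k` and some
other tree. -/
noncomputable def hornNMatrix : NMatrix (hornSig R k) (HornVal R) where
  D := {x | x.role = .win}
  interp c y := {x | x.TreeOk k c y ∧ x.role = roleOf q₀ k c y}
  interp_nonempty c y := by
    cases c with
    | pair => exact ⟨⟨⟨true, true, _, _⟩, _⟩, ⟨rfl, rfl, rfl⟩, rfl⟩
    | _ => exact ⟨⟨⟨false, true, true, true⟩, _⟩, ⟨rfl, rfl, rfl⟩, rfl⟩

theorem isVal_valOf : IsVal (hornNMatrix R q₀ k) (valOf q₀ β) := fun c args =>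
  ⟨treeOk_valOf c args, rfl⟩

section Completeness

variable {v : Fm (hornSig R k) → HornVal R}

/-- The colouring of the trees that a valuation induces through their canonical formulas. -/
def colouring (v : Fm (hornSig R k) → HornVal R) (t : Tree2) : Bool :=
  (v (treeFm t)).tree.bit

theorem tree_treeFm (hv : IsVal (hornNMatrix R q₀ k) v) (t : Tree2) :
    (v (treeFm t)).tree = ofTree (colouring v) t := by
  cases t with
  | nil => exact eq_ofTree_nil (hv .nil Fin.elim0).1 rfl
  | pair s t => exact eq_ofTree_pair (hv .pair ![treeFm s, treeFm t]).1 rfl rfl rfl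

theorem exists_proves_of_derives {q : Q} {s t : Tree2} (h : Derives R q s t) :
    ∃ A : Fm (hornSig R k), ∀ v, IsVal (hornNMatrix R q₀ k) v →
      (v A).Proves q (colouring v s) (colouring v t) := by
  induction h with
  | intro r hr x hchecks _ ih =>
    obtain ⟨i, rfl⟩ := List.mem_iff_get.1 hr
    choose prf hprf using fun p => ih _ (List.get_mem (R.get i).prems p)
    let args : Fin (7 + (R.get i).prems.length) → Fm (hornSig R k) :=
      Fin.append (fun j => treeFm (x j)) prf
    refine ⟨.app (.rule i) args, fun v hv => ⟨i, rfl, ?_⟩⟩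
    have htree (j : Fin 7) : (v (args (.castAdd _ j))).tree = ofTree (colouring v) (x j) := by
      simp only [args, Fin.append_left, tree_treeFm hv]
    have haccepts : RuleAccepts i fun j => v (args j) := by
      simp only [RuleAccepts, htree]
      refine ⟨fun c hc => Check.forall_accepts_ofTree.2 (hchecks c hc) _, fun p => ?_⟩
      simpa only [args, Fin.append_right] using! hprf p v hv
    rw [(hv (.rule i) args).2, roleOf, if_pos haccepts, htree, htree]
    rfl

theorem exists_entails_of_derives {t : Tree2} (h : Derives R q₀ (num k) t) :
    ∃ A, Entails (hornNMatrix R q₀ k) ∅ A := by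
  obtain ⟨A, hA⟩ := exists_proves_of_derives (q₀ := q₀) (k := k) h
  let args (i : Fin (k + 2)) : Fm (hornSig R k) := if i ≤ k then treeFm (num i) else A
  refine ⟨.app .goal args, fun v hv _ => ?_⟩
  have hnum {i : ℕ} (hi : i ≤ k) :
      (v (args (Fin.ofNat (k + 2) i))).tree = ofTree (colouring v) (num i) := by
    have : i % (k + 2) = i := Nat.mod_eq_of_lt (by omega)
    simp [args, this, hi, tree_treeFm hv]
  have hlast : args (Fin.ofNat (k + 2) (k + 1)) = A := by simp [args]
  have haccepts : GoalAccepts q₀ k fun i => v (args (Fin.ofNat (k + 2) i)) := by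
    refine ⟨?_, fun i hi => ?_, colouring v t, ?_⟩
    · rw [hnum k.zero_le]
      exact forall_isNil_ofTree.2 rfl _
    · rw [hnum k.zero_le, hnum hi, hnum hi.le]
      exact forall_isPairOf_ofTree.2 rfl _
    · simpa only [hnum le_rfl, hlast] using! hA v hv
  exact (hv .goal args).2.trans (if_pos haccepts)

end Completeness

section Soundness

theorem proves_valOf_rule {i : Fin R.length}
    {args : Fin (7 + (R.get i).prems.length) → Fm (hornSig R k)} {q : Q} {b c : Bool} :
    (valOf q₀ β (.app (.rule i) args)).Proves q b c ↔ (R.get i).concl = q ∧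
      RuleAccepts i (fun j => valOf q₀ β (args j)) ∧
      β (treeOf (args (.castAdd _ 0))) = b ∧ β (treeOf (args (.castAdd _ 1))) = c := by
  simp only [Proves, valOf, roleOf, tree_valOf, ofTree]
  split_ifs with haccepts
  · simp only [haccepts, Role.prf.injEq]
    grind
  · exact iff_of_false (by simp) fun h => haccepts h.2.1

theorem exists_eq_rule_of_proves {A : Fm (hornSig R k)} {q : Q} {b c : Bool}
    (h : (valOf q₀ β A).Proves q b c) : ∃ i args, A = .app (.rule i) args := by
  obtain ⟨j, -, hj⟩ := h
  rcases A with _ | ⟨_ | _ | i | _, args⟩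
  case app.rule => exact ⟨i, args, rfl⟩
  case app.goal =>
    simp only [valOf, roleOf] at hj
    split_ifs at hj
  all_goals simp [valOf, roleOf] at hj

theorem derives_of_forall_proves {A : Fm (hornSig R k)} {q : Q} {s t : Tree2}
    (h : ∀ β, (valOf q₀ β A).Proves q (β s) (β t)) : Derives R q s t := by
  induction A generalizing q s t with
  | var =>
    obtain ⟨i, args, ⟨⟩⟩ := exists_eq_rule_of_proves (h fun _ => true)
  | app c args ih =>
    obtain ⟨i, args, ⟨⟩⟩ := exists_eq_rule_of_proves (h fun _ => true)
    simp only [proves_valOf_rule, RuleAccepts, tree_valOf, forall_and] at h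
    obtain ⟨hconcl, ⟨hchecks, hprems⟩, hs, ht⟩ := h
    rw [← hconcl fun _ => true, ← eq_of_forall_colouring hs, ← eq_of_forall_colouring ht]
    let x (j : Fin 7) : Tree2 := treeOf (args (.castAdd _ j))
    refine .intro (R.get i) (R.get_mem i) x (fun c hc => ?_) fun p hp => ?_
    · exact Check.forall_accepts_ofTree.1 fun β => hchecks β c hc
    · obtain ⟨p, rfl⟩ := List.mem_iff_get.1 hp
      exact ih _ fun β => hprems β p

theorem exists_derives_of_forall_exists_proves {A : Fm (hornSig R k)} {q : Q} {s : Tree2}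
    (h : ∀ β, ∃ b, (valOf q₀ β A).Proves q (β s) b) : ∃ t, Derives R q s t := by
  obtain ⟨_, htrue⟩ := h fun _ => true
  obtain ⟨i, args, rfl⟩ := exists_eq_rule_of_proves htrue
  let t : Tree2 := treeOf (args (.castAdd _ 1))
  have hprf (β) : (valOf q₀ β (.app (.rule i) args)).Proves q (β s) (β t) := by
    obtain ⟨b, hb⟩ := h β
    obtain ⟨-, -, -, rfl⟩ := proves_valOf_rule.1 hb
    exact hb
  exact ⟨t, derives_of_forall_proves hprf⟩

theorem role_valOf_eq_win_iff {A : Fm (hornSig R k)} :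
    (valOf q₀ β A).role = .win ↔ ∃ args, A = .app .goal args ∧
      GoalAccepts q₀ k fun i => valOf q₀ β (args (Fin.ofNat (k + 2) i)) := by
  rcases A with _ | ⟨_ | _ | i | _, args⟩
  case app.goal =>
    simp only [valOf, roleOf, Fm.app.injEq, heq_eq_eq, true_and, exists_eq_left']
    split_ifs with h
    · exact iff_of_true rfl h
    · exact iff_of_false nofun h
  case app.rule =>
    simp only [valOf, roleOf]
    split_ifs <;> simp
  all_goals simp [valOf, roleOf]

theorem treeOf_eq_num {x : ℕ → Fm (hornSig R k)} (hzero : ∀ β, (valOf q₀ β (x 0)).tree.IsNil)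
    (hsucc : ∀ β, ∀ i < k,
      (valOf q₀ β (x (i + 1))).tree.IsPairOf (valOf q₀ β (x i)).tree (valOf q₀ β (x 0)).tree)
    {i : ℕ} (hi : i ≤ k) : treeOf (x i) = num i := by
  simp only [tree_valOf] at hzero hsucc
  induction i with
  | zero => exact forall_isNil_ofTree.1 hzero
  | succ i ih =>
    rw [forall_isPairOf_ofTree.1 fun β => hsucc β i hi, ih (by omega),
      forall_isNil_ofTree.1 hzero, num]

theorem exists_derives_of_entails {A : Fm (hornSig R k)} (h : Entails (hornNMatrix R q₀ k) ∅ A) :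
    ∃ t, Derives R q₀ (num k) t := by
  have hwin (β) : (valOf q₀ β A).role = .win := h _ isVal_valOf (by simp)
  obtain ⟨args, rfl, -⟩ := role_valOf_eq_win_iff.1 (hwin fun _ => true)
  let x (i : ℕ) : Fm (hornSig R k) := args (Fin.ofNat (k + 2) i)
  have haccepts (β) : GoalAccepts q₀ k fun i => valOf q₀ β (x i) := by
    obtain ⟨_, ⟨⟩, h⟩ := role_valOf_eq_win_iff.1 (hwin β)
    exact h
  have hnum : treeOf (x k) = num k :=
    treeOf_eq_num (fun β => (haccepts β).1) (fun β => (haccepts β).2.1) le_rfl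
  have hprf (β) : ∃ b, (valOf q₀ β (x (k + 1))).Proves q₀ (β (num k)) b := by
    simpa only [tree_valOf, hnum] using! (haccepts β).2.2
  exact exists_derives_of_forall_exists_proves hprf

end Soundness

theorem exists_entails_iff_exists_derives :
    (∃ A, Entails (hornNMatrix R q₀ k) ∅ A) ↔ ∃ t, Derives R q₀ (num k) t :=
  ⟨fun ⟨_, hA⟩ => exists_derives_of_entails hA, fun ⟨_, ht⟩ => exists_entails_of_derives ht⟩

end HornMatrix

section Undecidability

open HornVal

variable {Q : Type} {R : List (HornRule Q)} {q₀ : Q} {l m : ℕ}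

theorem primrecPred_goalAccepts {e : HornVal R ≃ Fin (m + 1)} :
    PrimrecPred fun p : ℕ × List ℕ => GoalAccepts q₀ p.1 fun i =>
      e.symm (Fin.ofNat (m + 1) (p.2.getD (Fin.ofNat (p.1 + 2) i) 0)) := by
  let arg (p : ℕ × List ℕ) (i : ℕ) : ℕ := p.2.getD (Fin.ofNat (p.1 + 2) i) 0
  have harg : Primrec₂ arg := (Primrec.list_getD 0).comp₂ (Primrec.snd.comp₂ Primrec₂.left)
    (Primrec.nat_mod.comp₂ Primrec₂.right
      ((Primrec.nat_add.comp Primrec.fst (Primrec.const 2)).comp₂ Primrec₂.left))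
  let val (p : ℕ × List ℕ) (i : ℕ) : HornVal R := e.symm (Fin.ofNat (m + 1) (arg p i))
  have hzero : PrimrecPred fun p => (val p 0).tree.IsNil :=
    NMatrix.primrecPred_finite (fun y : Fin 1 → HornVal R => (y 0).tree.IsNil)
      fun _ => harg.comp Primrec.id (Primrec.const 0)
  have hsucc : PrimrecRel fun i p => (val p (i + 1)).tree.IsPairOf (val p i).tree (val p 0).tree :=
    NMatrix.primrecPred_finite (α := ℕ × ℕ × List ℕ)
      (fun y : Fin 3 → HornVal R => (y 0).tree.IsPairOf (y 1).tree (y 2).tree)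
      (f := ![fun a => arg a.2 (a.1 + 1), fun a => arg a.2 a.1, fun a => arg a.2 0]) <| by
        intro i
        fin_cases i
        exacts [harg.comp Primrec.snd (Primrec.succ.comp Primrec.fst),
          harg.comp Primrec.snd Primrec.fst, harg.comp Primrec.snd (Primrec.const 0)]
  have hprf : PrimrecPred fun p => ∃ b, (val p (p.1 + 1)).Proves q₀ (val p p.1).tree.bit b :=
    NMatrix.primrecPred_finite (fun y : Fin 2 → HornVal R => ∃ b, (y 0).Proves q₀ (y 1).tree.bit b)
      (f := ![fun p => arg p (p.1 + 1), fun p => arg p p.1]) <| Fin.forall_fin_two.2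
        ⟨harg.comp Primrec.id (Primrec.succ.comp Primrec.fst), harg.comp Primrec.id Primrec.fst⟩
  have hchain := hsucc.forall_mem_list.comp (Primrec.list_range.comp Primrec.fst) Primrec.id
  exact (hzero.and (hchain.and hprf)).of_eq fun p => by simp only [List.mem_range]; rfl

theorem primrecPred_const {α : Type} [Primcodable α] (P : Prop) : PrimrecPred fun _ : α => P :=
  ⟨fun _ => Classical.dec P, Primrec.const _⟩

theorem primrec_code_hornNMatrix (σ : HornConn R ≃ Fin l) (e : HornVal R ≃ Fin (m + 1)) :
    Primrec fun k => (hornNMatrix R q₀ k).code σ e := by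
  refine NMatrix.primrec_code _ σ (fun c => ?_) (fun c x => ?_) fun x => primrecPred_const _
  · cases c with
    | goal => exact Primrec.nat_add.comp Primrec.id (Primrec.const 2)
    | _ => exact Primrec.const _
  · have hfixed (n : ℕ) (P : (Fin n → HornVal R) → Prop) : PrimrecPred fun p : ℕ × List ℕ =>
        P fun i => e.symm (Fin.ofNat (m + 1) (p.2.getD i 0)) :=
      NMatrix.primrecPred_finite P fun i =>
        (Primrec.list_getD 0).comp Primrec.snd (Primrec.const _)
    cases c with
    | goal =>
      have hgoal := primrecPred_goalAccepts (q₀ := q₀) (e := e)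
      have hwin := hgoal.and (primrecPred_const (x.role = .win))
      have hplain := hgoal.not.and (primrecPred_const (x.role = .plain))
      classical
      exact ((primrecPred_const x.tree.IsNil).and (hwin.or hplain)).of_eq fun p =>
        and_congr_right fun _ => eq_ite_iff.symm
    | nil => exact hfixed 0 fun y => x ∈ (hornNMatrix R q₀ 0).interp .nil y
    | pair => exact hfixed 2 fun y => x ∈ (hornNMatrix R q₀ 0).interp .pair y
    | rule i => exact hfixed _ fun y => x ∈ (hornNMatrix R q₀ 0).interp (.rule i) y

theorem not_computablePred_thmExistsProblem : ¬ ComputablePred thmExistsProblem := by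
  obtain ⟨c, hc⟩ := exists_not_computablePred_derives
  let R := subcodeRules c
  obtain ⟨l, ⟨σ⟩⟩ := Finite.exists_equiv_fin (HornConn R)
  obtain ⟨_ | m, ⟨e⟩⟩ := Finite.exists_equiv_fin (HornVal R)
  · exact (e ⟨⟨true, true, true, true⟩, .plain⟩).elim0
  let code (n : ℕ) : NMatCode := (hornNMatrix R c (n + 1)).code σ e
  have hcode : Computable code := ((primrec_code_hornNMatrix σ e).comp Primrec.succ).to_comp
  have hiff (n) : (∃ t, Derives R c (.num (n + 1)) t) ↔ thmExistsProblem (code n) :=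
    ((NMatrix.thmExistsProblem_code _ σ e).trans exists_entails_iff_exists_derives).symm
  exact fun h => hc (ComputablePred.computable_of_manyOneReducible ⟨code, hcode, hiff⟩ h)

end Undecidability

/-- If the equivalence problem for finite Nmatrices were decidable, then the
theorem existence problem for finite Nmatrices would be decidable; consequently (since the
latter is undecidable), the equivalence problem for finite Nmatrices is undecidable. -/
theorem stmt_13 :
    (ComputablePred eqvProblem → ComputablePred thmExistsProblem) ∧
    ¬ ComputablePred eqvProblem :=
  ⟨computablePred_thmExistsProblem_of_eqvProblem, fun h =>
    not_computablePred_thmExistsProblem (computablePred_thmExistsProblem_of_eqvProblem h)⟩
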